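/- arXiv:2509.05725 — 3 statements merged into one kernel-verified Lean document; each statement's English description precedes it below -/
import Mathlib

section
/- Let A be an abelian category with a C₂-action (T, u). If P is a projective object of A, then the induced equivariant object Ind(P) = (P ⊕ T(P), α_P) is a projective object of the category A^{(T,u)} of C₂-equivariant objects. -/
/-!
`Ind` is left adjoint to the forgetful functor `U` (via `C2Action.descHom` and
`C2Action.indObj_hom_ext`), so it preserves projectives as soon as `U` preserves epimorphisms.
The latter holds because `Ind` is also right adjoint to `U`: the transpose of `f : Y ⟶ Z` is
`C2Action.liftHom f`, and `C2Action.epi_val` deduces that `U` preserves epimorphisms.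
-/

open CategoryTheory CategoryTheory.Limits

universe v u

/-- A `C₂`-action on a category `C`: an autoequivalence `T` together with a natural
isomorphism `u : Id_C ≅ T ⋙ T` satisfying `Tu = uT`. -/
structure C2Action (C : Type u) [Category.{v} C] where
  T : C ⥤ C
  isEquiv : T.IsEquivalence
  u : Functor.id C ≅ T ⋙ T
  compat : ∀ X : C, T.map (u.hom.app X) = u.hom.app (T.obj X)

variable {C : Type u} [Category.{v} C]

/-- A `C₂`-equivariant object: `(X, α)` with `α : X ≅ T X` such that `T(α) ∘ α = u_X`. -/
structure EquivObj (A : C2Action C) where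
  X : C
  α : X ≅ A.T.obj X
  cond : α.hom ≫ A.T.map α.hom = A.u.hom.app X

/-- A morphism of `C₂`-equivariant objects: `f : X ⟶ Y` with `β ∘ f = T(f) ∘ α`. -/
@[ext]
structure EquivHom {A : C2Action C} (M N : EquivObj A) where
  val : M.X ⟶ N.X
  comm : val ≫ N.α.hom = M.α.hom ≫ A.T.map val

/-- The category of `C₂`-equivariant objects. -/
instance (A : C2Action C) : Category (EquivObj A) where
  Hom := EquivHom
  id M := ⟨𝟙 M.X, by simp⟩
  comp {M N P} f g := ⟨f.val ≫ g.val, by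
    rw [Category.assoc, g.comm, ← Category.assoc, f.comm, Category.assoc, ← Functor.map_comp]⟩
  id_comp f := EquivHom.ext (Category.id_comp _)
  comp_id f := EquivHom.ext (Category.comp_id _)
  assoc f g h := EquivHom.ext (Category.assoc _ _ _)

@[simp] lemma EquivObj.comp_val {A : C2Action C} {M N P : EquivObj A} (f : M ⟶ N) (g : N ⟶ P) :
    (f ≫ g).val = f.val ≫ g.val := rfl

@[simp] lemma EquivObj.id_val {A : C2Action C} (M : EquivObj A) :
    EquivHom.val (𝟙 M) = 𝟙 M.X := rfl

/-- The forgetful functor `U : C^{(T,u)} ⟶ C`, sending `(X, α)` to `X`. -/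
def C2Action.forget (A : C2Action C) : EquivObj A ⥤ C where
  obj M := M.X
  map f := f.val
  map_id _ := rfl
  map_comp _ _ := rfl

section Additive

variable [Preadditive C] [HasBinaryBiproducts C]

/-- The equivariant object `Ind(X) = (X ⊕ T X, ((0, 1), (u_X, 0)))`, where the isomorphism
`X ⊕ T X ≅ T (X ⊕ T X)` is written with respect to the canonical identification
`T (X ⊕ T X) ≅ T X ⊕ T² X`. -/
noncomputable def C2Action.indObj (A : C2Action C) [A.T.Additive] (X : C) : EquivObj A where
  X := X ⊞ A.T.obj X
  α :=
    { hom := biprod.desc (A.u.hom.app X ≫ A.T.map biprod.inr) (A.T.map biprod.inl)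
      inv := biprod.lift (A.T.map biprod.snd ≫ A.u.inv.app X) (A.T.map biprod.fst)
      hom_inv_id := by
        apply biprod.hom_ext' <;> apply biprod.hom_ext <;>
          simp [← Functor.map_comp, ← Functor.map_comp_assoc]
      inv_hom_id := by
        rw [biprod.lift_desc, Category.assoc, ← Category.assoc (A.u.inv.app X),
          Iso.inv_hom_id_app, Category.id_comp, ← Functor.map_comp, ← Functor.map_comp,
          ← Functor.map_add]
        have tot : (biprod.snd ≫ biprod.inr : X ⊞ A.T.obj X ⟶ _) + biprod.fst ≫ biprod.inl
            = 𝟙 _ := by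
          rw [add_comm]; exact biprod.total
        rw [tot]
        exact A.T.map_id _ }
  cond := by
    apply biprod.hom_ext'
    · rw [← Category.assoc, biprod.inl_desc, Category.assoc, ← Functor.map_comp, biprod.inr_desc]
      have nat := A.u.hom.naturality (biprod.inl : X ⟶ X ⊞ A.T.obj X)
      simp only [Functor.id_map, Functor.comp_map] at nat
      rw [← nat]
    · rw [← Category.assoc, biprod.inr_desc, ← Functor.map_comp, biprod.inl_desc]
      have nat := A.u.hom.naturality (biprod.inr : A.T.obj X ⟶ X ⊞ A.T.obj X)
      simp only [Functor.id_map, Functor.comp_map] at nat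
      rw [Functor.map_comp, A.compat X, ← nat]

/-- The induction functor `Ind : C ⟶ C^{(T,u)}`, with `Ind(X) = (X ⊕ T X, ((0,1),(u_X,0)))`
and `Ind(f) = f ⊕ T(f)`. -/
noncomputable def C2Action.Ind (A : C2Action C) [A.T.Additive] : C ⥤ EquivObj A where
  obj X := A.indObj X
  map {X Y} f :=
    { val := biprod.map f (A.T.map f)
      comm := by
        have nat := A.u.hom.naturality f
        simp only [Functor.id_map, Functor.comp_map] at nat
        apply biprod.hom_ext'
        · simp only [C2Action.indObj, biprod.inl_map_assoc, biprod.inl_desc,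
            biprod.inl_desc_assoc, Category.assoc, ← Functor.map_comp, biprod.inr_map]
          rw [Functor.map_comp, reassoc_of% nat]
        · simp [C2Action.indObj, ← Functor.map_comp, ← Functor.map_comp_assoc] }
  map_id X := by
    apply EquivHom.ext
    apply biprod.hom_ext' <;> simp [C2Action.indObj]
  map_comp f g := by
    apply EquivHom.ext
    apply biprod.hom_ext' <;> simp [C2Action.indObj]

/-- The morphism `Ind(X) ⟶ (Y, β)` with components `f : X ⟶ Y` and
`β⁻¹ ∘ T(f) : T(X) ⟶ Y` associated to a morphism `f : X ⟶ Y`. -/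
noncomputable def C2Action.descHom (A : C2Action C) [A.T.Additive] {X : C} {N : EquivObj A}
    (f : X ⟶ N.X) : A.indObj X ⟶ N where
  val := biprod.desc f (A.T.map f ≫ N.α.inv)
  comm := by
    have nat := A.u.hom.naturality f
    simp only [Functor.id_map, Functor.comp_map] at nat
    have hβ : N.α.hom = A.u.hom.app N.X ≫ A.T.map N.α.inv := by
      rw [← N.cond, Category.assoc, ← Functor.map_comp, N.α.hom_inv_id,
        CategoryTheory.Functor.map_id, Category.comp_id]
    show biprod.desc f (A.T.map f ≫ N.α.inv) ≫ N.α.hom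
        = biprod.desc (A.u.hom.app X ≫ A.T.map biprod.inr) (A.T.map biprod.inl) ≫
          A.T.map (biprod.desc f (A.T.map f ≫ N.α.inv))
    apply biprod.hom_ext'
    · rw [← Category.assoc, biprod.inl_desc, ← Category.assoc, biprod.inl_desc, Category.assoc,
        ← Functor.map_comp, biprod.inr_desc, Functor.map_comp, ← Category.assoc, ← nat,
        Category.assoc, ← hβ]
    · rw [← Category.assoc, biprod.inr_desc, ← Category.assoc, biprod.inr_desc,
        ← Functor.map_comp, biprod.inl_desc, Category.assoc, N.α.inv_hom_id, Category.comp_id]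

end Additive

/-- The morphism `(Y, β) ⟶ Ind(Z)` with components `f : Y ⟶ Z` and `T(f) ∘ β : Y ⟶ T(Z)`
associated to a morphism `f : Y ⟶ Z`. It exhibits `Ind` as a right adjoint of the forgetful
functor. -/
noncomputable def C2Action.liftHom [Preadditive C] [HasBinaryBiproducts C] (A : C2Action C)
    [A.T.Additive] {M : EquivObj A} {Z : C} (f : M.X ⟶ Z) : M ⟶ A.indObj Z where
  val := biprod.lift f (M.α.hom ≫ A.T.map f)
  comm := by
    have nat := A.u.hom.naturality f
    simp only [Functor.id_map, Functor.comp_map] at nat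
    refine (Iso.eq_comp_inv (A.indObj Z).α).1 ?_
    show biprod.lift f (M.α.hom ≫ A.T.map f) =
      (M.α.hom ≫ A.T.map (biprod.lift f (M.α.hom ≫ A.T.map f))) ≫
        biprod.lift (X := Z) (A.T.map biprod.snd ≫ A.u.inv.app Z) (A.T.map biprod.fst)
    apply biprod.hom_ext
    · simp only [biprod.lift_fst, Category.assoc, ← Functor.map_comp_assoc, biprod.lift_snd]
      rw [Functor.map_comp, Category.assoc, reassoc_of% M.cond, ← reassoc_of% nat,
        Iso.hom_inv_id_app]
      exact (Category.comp_id f).symm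
    · simp only [biprod.lift_snd, Category.assoc, ← Functor.map_comp, biprod.lift_fst]

/-- The forgetful functor preserves epimorphisms, because two maps out of `N` that agree after
`e` lift to equivariant maps into `Ind(Z)` that agree after `e`. -/
lemma C2Action.epi_val [Preadditive C] [HasBinaryBiproducts C] (A : C2Action C)
    [A.T.Additive] {M N : EquivObj A} (e : M ⟶ N) [Epi e] : Epi e.val where
  left_cancellation {Z} g h hgh := by
    have key : e ≫ A.liftHom g = e ≫ A.liftHom h := by
      apply EquivHom.ext
      show e.val ≫ biprod.lift g (N.α.hom ≫ A.T.map g) =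
        e.val ≫ biprod.lift h (N.α.hom ≫ A.T.map h)
      apply biprod.hom_ext
      · simpa using hgh
      · simp only [Category.assoc, biprod.lift_snd]
        rw [reassoc_of% e.comm, reassoc_of% e.comm, ← Functor.map_comp, ← Functor.map_comp, hgh]
    have hval : biprod.lift g (N.α.hom ≫ A.T.map g) = biprod.lift h (N.α.hom ≫ A.T.map h) :=
      congrArg EquivHom.val ((cancel_epi e).1 key)
    simpa using congrArg (· ≫ biprod.fst) hval

/-- An equivariant map out of `Ind(X)` is determined by its restriction to `X`. -/
lemma C2Action.indObj_hom_ext [Preadditive C] [HasBinaryBiproducts C] (A : C2Action C)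
    [A.T.Additive] {X : C} {N : EquivObj A} (f g : A.indObj X ⟶ N)
    (h : (biprod.inl : X ⟶ X ⊞ A.T.obj X) ≫ f.val = biprod.inl ≫ g.val) : f = g := by
  -- Equivariance forces the component on `T(X)` to be `β⁻¹ ∘ T(component on X)`.
  have aux (k : A.indObj X ⟶ N) : (biprod.inr : A.T.obj X ⟶ X ⊞ A.T.obj X) ≫ k.val =
      A.T.map ((biprod.inl : X ⟶ X ⊞ A.T.obj X) ≫ k.val) ≫ N.α.inv := by
    obtain ⟨k, hk⟩ := k
    change X ⊞ A.T.obj X ⟶ N.X at k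
    change k ≫ N.α.hom = biprod.desc (A.u.hom.app X ≫ A.T.map biprod.inr)
      (A.T.map biprod.inl) ≫ A.T.map k at hk
    change biprod.inr ≫ k = A.T.map (biprod.inl ≫ k) ≫ N.α.inv
    rw [Iso.eq_comp_inv, Category.assoc, hk, biprod.inr_desc_assoc, Functor.map_comp]
  apply EquivHom.ext
  apply biprod.hom_ext'
  · exact h
  · exact (aux f).trans ((congrArg (fun k => A.T.map k ≫ N.α.inv) h).trans (aux g).symm)

/-- Let `A` be an abelian category with a `C₂`-action `(T, u)`. If `P` is a
projective object of `A`, then the induced equivariant object `Ind(P) = (P ⊕ T(P), α_P)` is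
a projective object of the category of `C₂`-equivariant objects. -/
theorem C2Action.projective_indObj
    {C : Type u} [Category.{v} C] [Abelian C]
    (A : C2Action C) [A.T.Additive] (P : C) (hP : Projective P) :
    Projective (A.indObj P) := by
  refine ⟨fun {E X} f e he => ?_⟩
  have := A.epi_val e
  let p : P ⟶ X.X := (biprod.inl : P ⟶ P ⊞ A.T.obj P) ≫ f.val
  refine ⟨A.descHom (Projective.factorThru p e.val), A.indObj_hom_ext _ _ ?_⟩
  show biprod.inl ≫ biprod.desc _ _ ≫ e.val = p
  rw [biprod.inl_desc_assoc, Projective.factorThru_comp]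
end

section
/- Let R be any ring (associative, with unit). Then the stable category R-Mod-underline, the quotient of the category of all left R-modules by the ideal of morphisms factoring through a projective module, is idempotent-split: every idempotent endomorphism in R-Mod-underline splits. -/
/-!
The proof is a variant of the Eilenberg swindle. Write `[f]` for the stable class of `f`.

*Kernels of stably split epimorphisms.* Let `f : A ⟶ B` and `g : B ⟶ A` satisfy
`[g ≫ f] = 𝟙`. Adding an epimorphism `F ⟶ B` from a projective makes `f` into an honest epimorphism
`A ⊞ F ⟶ B`. The error `g ≫ f - 𝟙` factors through a projective, hence lifts along this
epimorphism, so `g` can be corrected to an honest section. The kernel of `A ⊞ F ⟶ B` is then a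
direct summand, and it splits the stable idempotent `𝟙 - [f ≫ g]`
(`exists_split_of_stable_section`).

*The swindle.* Let `e : M ⟶ M` be stably idempotent, let `A = M^(ℕ)` be the countable direct sum,
let `E` be `e` applied coordinatewise and let `S`, `T` be the forward and backward shifts. If `[e]`
did split, then `f = E T + (1 - E)` would be the backward shift on the summand of `A` given by the
image of `e`, and the identity on the complement. Accordingly `g = E S + (1 - E)` is a stable
section of `f`, and `𝟙 - [f ≫ g]` is the idempotent `e` placed in coordinate `0`. The latter
splits by the first step, and therefore so does `[e]`.
-/

open CategoryTheory

universe u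

/-- The stable relation on the category of left `R`-modules: two homomorphisms are related
iff their difference factors through a projective module. The quotient of `R-Mod` by this
relation is the stable category of `R-Mod`. -/
def stableRel (R : Type u) [Ring R] : HomRel (ModuleCat.{u} R) :=
  fun {M N} f g =>
    ∃ (P : ModuleCat.{u} R), Projective P ∧ ∃ (a : M ⟶ P) (b : P ⟶ N), f - g = a ≫ b

/-- The stable category of the category of all left `R`-modules: it has the same objects as
`R-Mod`, and its Hom-groups are the quotients of those of `R-Mod` by the subgroup of
homomorphisms factoring through a projective module. -/
abbrev StableModuleCat (R : Type u) [Ring R] := CategoryTheory.Quotient (stableRel R)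

open Limits

namespace StableModule

variable (R : Type u) [Ring R]

lemma stableRel_add ⦃X Y : ModuleCat.{u} R⦄ (f₁ f₂ g₁ g₂ : X ⟶ Y)
    (hf : stableRel R f₁ f₂) (hg : stableRel R g₁ g₂) : stableRel R (f₁ + g₁) (f₂ + g₂) := by
  obtain ⟨P, hP, a, b, h⟩ := hf
  obtain ⟨P', hP', a', b', h'⟩ := hg
  refine ⟨P ⊞ P', inferInstance, biprod.lift a a', biprod.desc b b', ?_⟩
  rw [biprod.lift_desc, ← h, ← h']
  abel

instance : Congruence (stableRel R) where
  equivalence :=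
    { refl := fun f => ⟨ModuleCat.of R PUnit, inferInstance, 0, 0, by simp⟩
      symm := by
        rintro f g ⟨P, hP, a, b, h⟩
        exact ⟨P, hP, -a, b, by rw [Preadditive.neg_comp, ← h]; abel⟩
      trans := by
        intro f g k h h'
        obtain ⟨P, hP, a, b, h⟩ := stableRel_add R _ _ _ _ h h'
        exact ⟨P, hP, a, b, by rw [← h]; abel⟩ }
  comp_left := by
    rintro X Y Z f g g' ⟨P, hP, a, b, h⟩
    exact ⟨P, hP, f ≫ a, b, by rw [← Preadditive.comp_sub, h, Category.assoc]⟩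
  comp_right := by
    rintro X Y Z f f' g ⟨P, hP, a, b, h⟩
    exact ⟨P, hP, a, b ≫ g, by rw [← Preadditive.sub_comp, h, Category.assoc]⟩

instance : Preadditive (StableModuleCat R) :=
  Quotient.preadditive _ (stableRel_add R)

/-- The quotient functor from `R`-modules to the stable category. -/
abbrev stab : ModuleCat.{u} R ⥤ StableModuleCat R := Quotient.functor _

instance : (stab R).Additive := Quotient.functor_additive _ (stableRel_add R)

variable {R}

lemma stab_comp_eq_zero {X Y P : ModuleCat.{u} R} (hP : Projective P) (a : X ⟶ P) (b : P ⟶ Y) :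
    (stab R).map (a ≫ b) = 0 := by
  rw [← (stab R).map_zero, Quotient.functor_map_eq_iff]
  exact ⟨P, hP, a, b, by simp⟩

/-- If `f` is a stably split epimorphism with stable section `g`, then the complementary stable
idempotent `𝟙 - [f ≫ g]` splits. -/
lemma exists_split_of_stable_section {A B : ModuleCat.{u} R} (f : A ⟶ B) (g : B ⟶ A)
    (h : (stab R).map (g ≫ f) = 𝟙 _) :
    ∃ (K : StableModuleCat R) (i : K ⟶ (stab R).obj A) (r : (stab R).obj A ⟶ K),
      i ≫ r = 𝟙 K ∧ r ≫ i = 𝟙 _ - (stab R).map (f ≫ g) := by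
  rw [← (stab R).map_id, Quotient.functor_map_eq_iff] at h
  obtain ⟨P, hP, α, β, hαβ⟩ := h
  let F := Projective.over B
  let φ : A ⊞ F ⟶ B := biprod.desc f (Projective.π B)
  have hφ : Epi φ := by
    have : Epi (biprod.inr ≫ φ) := by
      simp only [φ, biprod.inr_desc]
      infer_instance
    exact epi_of_epi biprod.inr φ
  let β' : P ⟶ A ⊞ F := Projective.factorThru β φ
  have hβ' : β' ≫ φ = β := Projective.factorThru_comp β φ
  -- The correction of `g` to an honest section of `φ`.
  let s : B ⟶ A ⊞ F := g ≫ biprod.inl - α ≫ β'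
  have hs : s ≫ φ = 𝟙 B := by
    simp only [s, Preadditive.sub_comp, Category.assoc, hβ', ← hαβ]
    simp [φ]
  let r : A ⊞ F ⟶ kernel φ := kernel.lift φ (𝟙 _ - φ ≫ s) (by simp [hs])
  have hr : r ≫ kernel.ι φ = 𝟙 _ - φ ≫ s := kernel.lift_ι _ _ _
  have hi : kernel.ι φ ≫ r = 𝟙 _ := by
    rw [← cancel_mono (kernel.ι φ), Category.assoc, hr]
    simp
  -- Stably, `A ⊞ F` and `A` agree, since `F` is projective.
  have hF : (stab R).map ((biprod.fst : A ⊞ F ⟶ A) ≫ biprod.inl) = 𝟙 _ := by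
    have h0 : (stab R).map ((biprod.snd : A ⊞ F ⟶ F) ≫ (biprod.inr : F ⟶ A ⊞ F)) = 0 :=
      stab_comp_eq_zero inferInstance _ _
    rw [← (stab R).map_id, ← biprod.total, (stab R).map_add, h0, add_zero]
  refine ⟨(stab R).obj (kernel φ), (stab R).map (kernel.ι φ ≫ biprod.fst),
    (stab R).map (biprod.inl ≫ r), ?_, ?_⟩
  · calc _ = (stab R).map (kernel.ι φ) ≫ (stab R).map (biprod.fst ≫ biprod.inl) ≫
          (stab R).map r := by simp only [Functor.map_comp, Category.assoc]
      _ = 𝟙 _ := by rw [hF, Category.id_comp, ← Functor.map_comp, hi, CategoryTheory.Functor.map_id]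
  · have h1 : (biprod.inl ≫ r) ≫ kernel.ι φ ≫ biprod.fst
        = 𝟙 A - f ≫ g + (f ≫ α) ≫ β' ≫ biprod.fst := by
      rw [Category.assoc, reassoc_of% hr]
      simp only [s, Preadditive.sub_comp, Preadditive.comp_sub, Category.assoc, Category.id_comp,
        biprod.inl_fst, Category.comp_id, φ, biprod.inl_desc_assoc]
      abel
    rw [← Functor.map_comp, h1, Functor.map_add, stab_comp_eq_zero hP, add_zero,
      Functor.map_sub, CategoryTheory.Functor.map_id]

section Swindle

/-- The countable direct sum `M^(ℕ)`. -/
noncomputable abbrev countableSum (M : ModuleCat.{u} R) : ModuleCat.{u} R := ModuleCat.of R (ℕ →₀ M)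

/-- The homomorphism of countable direct sums acting coordinatewise. -/
noncomputable abbrev countableMap {M N : ModuleCat.{u} R} (f : M ⟶ N) :
    countableSum M ⟶ countableSum N :=
  ModuleCat.ofHom (Finsupp.mapRange.linearMap f.hom)

/-- The forward shift `(m₀, m₁, …) ↦ (0, m₀, m₁, …)`. -/
noncomputable abbrev shift (M : ModuleCat.{u} R) : countableSum M ⟶ countableSum M :=
  ModuleCat.ofHom (Finsupp.lmapDomain M R Nat.succ)

/-- The backward shift `(m₀, m₁, …) ↦ (m₁, m₂, …)`. -/
noncomputable abbrev backshift (M : ModuleCat.{u} R) : countableSum M ⟶ countableSum M :=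
  ModuleCat.ofHom (Finsupp.lcomapDomain Nat.succ Nat.succ_injective)

/-- The inclusion of coordinate `0`. -/
noncomputable abbrev incl (M : ModuleCat.{u} R) : M ⟶ countableSum M :=
  ModuleCat.ofHom (Finsupp.lsingle 0)

/-- The projection onto coordinate `0`. -/
noncomputable abbrev proj (M : ModuleCat.{u} R) : countableSum M ⟶ M :=
  ModuleCat.ofHom (Finsupp.lapply 0)

variable {M : ModuleCat.{u} R}

lemma shift_apply_zero (x : ℕ →₀ M) : Finsupp.mapDomain Nat.succ x 0 = 0 :=
  Finsupp.mapDomain_of_notMem_range _ _ (by simp)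

lemma shift_apply_succ (x : ℕ →₀ M) (n : ℕ) : Finsupp.mapDomain Nat.succ x (n + 1) = x n :=
  Finsupp.mapDomain_apply Nat.succ_injective _ _

lemma incl_proj : incl M ≫ proj M = 𝟙 M := by
  ext x
  simp

lemma shift_backshift : shift M ≫ backshift M = 𝟙 _ := by
  refine ModuleCat.hom_ext (LinearMap.ext fun (x : ℕ →₀ M) => Finsupp.ext fun n => ?_)
  exact shift_apply_succ x n

lemma backshift_shift : backshift M ≫ shift M = 𝟙 _ - proj M ≫ incl M := by
  rw [eq_sub_iff_add_eq]
  refine ModuleCat.hom_ext (LinearMap.ext fun (x : ℕ →₀ M) => Finsupp.ext fun n => ?_)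
  change Finsupp.mapDomain Nat.succ (Finsupp.comapDomain Nat.succ x _) n
    + Finsupp.single 0 (x 0) n = x n
  cases n with
  | zero => rw [shift_apply_zero]; simp
  | succ n => rw [shift_apply_succ]; simp

lemma countableMap_shift (e : M ⟶ M) :
    countableMap e ≫ shift M = shift M ≫ countableMap e := by
  refine ModuleCat.hom_ext (LinearMap.ext fun (x : ℕ →₀ M) => Finsupp.ext fun n => ?_)
  change Finsupp.mapDomain Nat.succ (Finsupp.mapRange e.hom (map_zero e.hom) x) n
    = e.hom (Finsupp.mapDomain Nat.succ x n)
  cases n with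
  | zero => rw [shift_apply_zero, shift_apply_zero, map_zero]
  | succ n => rw [shift_apply_succ, shift_apply_succ]; rfl

lemma countableMap_backshift (e : M ⟶ M) :
    countableMap e ≫ backshift M = backshift M ≫ countableMap e := by
  exact ModuleCat.hom_ext (LinearMap.ext fun (x : ℕ →₀ M) => Finsupp.ext fun n => rfl)

/-- A countable direct sum of copies of a projective is projective, so coordinatewise
application preserves stable idempotents. -/
lemma stab_countableMap_idem (e : M ⟶ M) (he : stableRel R (e ≫ e) e) :
    (stab R).map (countableMap e) ≫ (stab R).map (countableMap e)
      = (stab R).map (countableMap e) := by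
  obtain ⟨P, hP, a, b, h⟩ := he
  have hP' : Module.Projective R P := (IsProjective.iff_projective P).2 hP
  have hQ : Projective (countableSum P) := by
    classical
    have : Module.Projective R (ℕ →₀ P) :=
      Module.Projective.of_equiv (finsuppLequivDFinsupp (ι := ℕ) (M := P) R).symm
    exact (IsProjective.iff_projective (ℕ →₀ P)).1 this
  rw [← Functor.map_comp, Quotient.functor_map_eq_iff]
  refine ⟨_, hQ, countableMap a, countableMap b, ?_⟩
  refine ModuleCat.hom_ext (LinearMap.ext fun (x : ℕ →₀ M) => Finsupp.ext fun n => ?_)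
  exact congrArg (fun k : M ⟶ M => k.hom (x n)) h

end Swindle

/-- The algebra of the swindle: the maps `e t + (1 - e)` and `e s + (1 - e)`, composed in the two
possible orders. -/
lemma swindle_identities {C : Type*} [Category C] [Preadditive C] {A : C} (e s t : A ⟶ A)
    (hee : e ≫ e = e) (hes : e ≫ s = s ≫ e) (het : e ≫ t = t ≫ e) (hst : s ≫ t = 𝟙 A) :
    (s ≫ e + (𝟙 A - e)) ≫ (t ≫ e + (𝟙 A - e)) = 𝟙 A ∧
    (t ≫ e + (𝟙 A - e)) ≫ (s ≫ e + (𝟙 A - e)) = 𝟙 A - (𝟙 A - t ≫ s) ≫ e := by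
  constructor
  · simp only [Preadditive.add_comp, Preadditive.comp_add, Preadditive.sub_comp,
      Preadditive.comp_sub, Category.assoc, Category.comp_id, Category.id_comp, hee,
      reassoc_of% het, reassoc_of% hst]
    abel
  · simp only [Preadditive.add_comp, Preadditive.comp_add, Preadditive.sub_comp,
      Preadditive.comp_sub, Category.assoc, Category.comp_id, Category.id_comp, hee,
      reassoc_of% hes]
    abel

end StableModule

open StableModule in
/-- For any ring `R`, the stable category of the category of all left
`R`-modules is idempotent-split: every idempotent endomorphism in it splits. -/
theorem stableModuleCat_isIdempotentComplete (R : Type u) [Ring R] :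
    IsIdempotentComplete (StableModuleCat R) := by
  refine ⟨fun X p hp => ?_⟩
  obtain ⟨M, rfl⟩ : ∃ M, (stab R).obj M = X := ⟨X.as, rfl⟩
  obtain ⟨e, rfl⟩ := (stab R).map_surjective p
  have he : stableRel R (e ≫ e) e := by
    refine (Quotient.functor_map_eq_iff (stableRel R) _ _).1 ?_
    rw [Functor.map_comp]
    exact hp
  have key := swindle_identities ((stab R).map (countableMap e)) ((stab R).map (shift M))
    ((stab R).map (backshift M)) (stab_countableMap_idem e he)
    (by simp only [← Functor.map_comp, countableMap_shift])
    (by simp only [← Functor.map_comp, countableMap_backshift])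
    (by rw [← Functor.map_comp, shift_backshift, CategoryTheory.Functor.map_id])
  obtain ⟨key₁, key₂⟩ := key
  obtain ⟨K, i, r, hir, hri⟩ := exists_split_of_stable_section
    (backshift M ≫ countableMap e + (𝟙 _ - countableMap e))
    (shift M ≫ countableMap e + (𝟙 _ - countableMap e))
    (by simpa only [Functor.map_comp, Functor.map_add, Functor.map_sub, CategoryTheory.Functor.map_id] using key₁)
  have hιπ : (stab R).map (incl M) ≫ (stab R).map (proj M) = 𝟙 _ := by
    rw [← Functor.map_comp, incl_proj, CategoryTheory.Functor.map_id]
  -- The split idempotent is `e` placed in coordinate `0`.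
  have hri' : r ≫ i = (stab R).map (proj M) ≫ (stab R).map e ≫ (stab R).map (incl M) := by
    have hcoord : (proj M ≫ incl M) ≫ countableMap e = proj M ≫ e ≫ incl M := by
      exact ModuleCat.hom_ext (LinearMap.ext fun (x : ℕ →₀ M) =>
        Finsupp.mapRange_single (hf := map_zero e.hom))
    rw [hri]
    simp only [Functor.map_comp, Functor.map_add, Functor.map_sub, CategoryTheory.Functor.map_id]
    rw [key₂, sub_sub_cancel, ← Functor.map_comp, backshift_shift, ← CategoryTheory.Functor.map_id,
      ← Functor.map_sub, sub_sub_cancel, ← Functor.map_comp, hcoord, Functor.map_comp,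
      Functor.map_comp]
  generalize (stab R).map (proj M) = π at *
  generalize (stab R).map (incl M) = ι at *
  generalize (stab R).map e = ε at *
  refine ⟨K, i ≫ π, ι ≫ r, ?_, ?_⟩
  -- `i = i ≫ r ≫ i` ends in `ι`, hence is fixed by `π ≫ ι`.
  · have h1 : i ≫ π ≫ ι = i := by
      have h2 : i = i ≫ π ≫ ε ≫ ι := by rw [← hri', reassoc_of% hir]
      calc i ≫ π ≫ ι = (i ≫ π ≫ ε ≫ ι) ≫ π ≫ ι := by rw [← h2]
        _ = i ≫ π ≫ ε ≫ ι := by simp only [Category.assoc, reassoc_of% hιπ]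
        _ = i := h2.symm
    calc (i ≫ π) ≫ ι ≫ r = (i ≫ π ≫ ι) ≫ r := by simp only [Category.assoc]
      _ = 𝟙 K := by rw [h1, hir]
  · calc (ι ≫ r) ≫ i ≫ π = ι ≫ (r ≫ i) ≫ π := by simp only [Category.assoc]
      _ = ε := by
        rw [hri']
        simp only [Category.assoc, hιπ, reassoc_of% hιπ, Category.comp_id]
end

section
/- Let R = R₀ ⊕ R₁ be a super ring in which 2 (i.e. 1+1) is invertible. Let (M, α) be a C₂-equivariant object in R-SMod with respect to the strict C₂-action ((1̄), Id), i.e. M = M₀ ⊕ M₁ is a super R-module and α : M ≅ M(1̄) is an isomorphism of super R-modules with α(1̄) ∘ α = Id_M. Let N denote the ordinary R-module Φ(M, α), namely the abelian group M₀ with R-action a * x = ax for a ∈ R₀ and a * x = α(ax) for a ∈ R₁. Then the map φ : N ⊕ ^gN → M (with M regarded as an ordinary R-module by forgetting the grading, and ^gN the twist of N along the parity automorphism g), defined by φ(x) = x + α(x) on the first summand and φ(^g x) = x − α(x) on the second summand, is an isomorphism of ordinary R-modules. -/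
/-!
For `x, y ∈ M₀` one has `φ(x, y) = (x + y) + α(x - y)`, with even component `x + y` and odd
component `α(x - y)`. Since `α` is an involution exchanging `M₀` and `M₁`, the value `φ(x, y)`
determines `x + y` and `x - y`, and these can be prescribed arbitrarily in `M₀`. They determine
`x` and `y` because `2` acts bijectively on `M₀` (`SMod.exists_half_even`,
`SMod.eq_zero_of_add_self`).

Linearity is a computation on `a = a₀ + a₁` (`evenPart_add_oddPart`) using `α² = 1`: on the first
summand `z = a₀x + α(a₁x)` satisfies `z + α(z) = a(x + α(x))`, and replacing `a` by
`g(a) = a₀ - a₁` accounts for the sign in the second summand.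
-/

open DirectSum

universe u v

variable (R : Type u) [Ring R] (𝒜 : ZMod 2 → AddSubgroup R)

/-- A super (`ℤ₂`-graded) module over a super ring `R` with grading `𝒜`: a module `M`
together with a grading `M = M₀ ⊕ M₁` such that `𝒜 i • grading j ⊆ grading (i + j)`. -/
structure SMod : Type (max u (v + 1)) where
  carrier : Type v
  [isAddCommGroup : AddCommGroup carrier]
  [isModule : Module R carrier]
  grading : ZMod 2 → AddSubgroup carrier
  smul_mem : ∀ (i j : ZMod 2) (a : R) (m : carrier),
    a ∈ 𝒜 i → m ∈ grading j → a • m ∈ grading (i + j)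
  cover : ∀ m : carrier, ∃ m₀ ∈ grading 0, ∃ m₁ ∈ grading 1, m = m₀ + m₁
  indep : ∀ m₀ ∈ grading 0, ∀ m₁ ∈ grading 1, m₀ + m₁ = 0 → m₀ = 0 ∧ m₁ = 0

attribute [instance] SMod.isAddCommGroup SMod.isModule

variable [GradedRing 𝒜]

/-- The even part `a₀` of a ring element `a = a₀ + a₁` of the super ring `R`. -/
noncomputable def evenPart (a : R) : R := ↑(DirectSum.decompose 𝒜 a 0)

/-- The odd part `a₁` of a ring element `a = a₀ + a₁` of the super ring `R`. -/
noncomputable def oddPart (a : R) : R := ↑(DirectSum.decompose 𝒜 a 1)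

/-- The parity automorphism `g` of the super ring `R`, `g(a) = (-1)^i a` for `a ∈ R_i`,
i.e. `g(a₀ + a₁) = a₀ - a₁`. -/
noncomputable def parityFun (a : R) : R := evenPart R 𝒜 a - oddPart R 𝒜 a

variable {R 𝒜}

/-- The action `*` of `R` on the even part `M₀ = Φ(M, α)` of a super module equipped with
a degree-shifting linear map `α`: homogeneous even `a` act by `a • x`, homogeneous odd `a`
act by `α (a • x)`. -/
noncomputable def starSMul (M : SMod.{u, v} R 𝒜) (f : M.carrier →ₗ[R] M.carrier)
    (hf : ∀ (i : ZMod 2) (m : M.carrier), m ∈ M.grading i → f m ∈ M.grading (i + 1)) :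
    R → ↥(M.grading 0) → ↥(M.grading 0) := fun a x =>
  ⟨evenPart R 𝒜 a • (x : M.carrier) + f (oddPart R 𝒜 a • (x : M.carrier)), by
    apply AddSubgroup.add_mem
    · have h := M.smul_mem 0 0 (evenPart R 𝒜 a) x (SetLike.coe_mem _) x.2
      rwa [show (0 : ZMod 2) + 0 = 0 from rfl] at h
    · have h1 : oddPart R 𝒜 a • (x : M.carrier) ∈ M.grading 1 := by
        have h := M.smul_mem 1 0 (oddPart R 𝒜 a) x (SetLike.coe_mem _) x.2
        rwa [show (1 : ZMod 2) + 0 = 1 from rfl] at h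
      have h2 := hf 1 _ h1
      rwa [show (1 : ZMod 2) + 1 = 0 from rfl] at h2⟩

/-- The map `φ : N ⊕ ^gN → M`, `φ(x) = x + α(x)` on the first summand and
`φ(^g y) = y - α(y)` on the second summand, for `x, y ∈ N = M₀`. -/
noncomputable def phiMap (M : SMod.{u, v} R 𝒜) (α : M.carrier →ₗ[R] M.carrier)
    (p : ↥(M.grading 0) × ↥(M.grading 0)) : M.carrier :=
  ((p.1 : M.carrier) + α (p.1 : M.carrier)) + ((p.2 : M.carrier) - α (p.2 : M.carrier))

theorem evenPart_add_oddPart (a : R) : evenPart R 𝒜 a + oddPart R 𝒜 a = a := by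
  classical
  have h := DirectSum.sum_support_decompose 𝒜 a
  rw [Finset.sum_subset (Finset.subset_univ _)
    (fun i _ hi => by simpa using hi)] at h
  exact (Fin.sum_univ_two (fun i : ZMod 2 => (↑(DirectSum.decompose 𝒜 a i) : R))).symm.trans h

theorem evenPart_parityFun (a : R) : evenPart R 𝒜 (parityFun R 𝒜 a) = evenPart R 𝒜 a := by
  have h0 := DirectSum.decompose_of_mem_same 𝒜 (DirectSum.decompose 𝒜 a 0).2
  have h1 := DirectSum.decompose_of_mem_ne 𝒜 (DirectSum.decompose 𝒜 a 1).2
    (show (1 : ZMod 2) ≠ 0 by decide)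
  simp only [evenPart, oddPart, parityFun, DirectSum.decompose_sub, DirectSum.sub_apply,
    AddSubgroup.coe_sub, h0, h1, sub_zero]

theorem oddPart_parityFun (a : R) : oddPart R 𝒜 (parityFun R 𝒜 a) = -oddPart R 𝒜 a := by
  have h0 := DirectSum.decompose_of_mem_ne 𝒜 (DirectSum.decompose 𝒜 a 0).2
    (show (0 : ZMod 2) ≠ 1 by decide)
  have h1 := DirectSum.decompose_of_mem_same 𝒜 (DirectSum.decompose 𝒜 a 1).2
  simp only [evenPart, oddPart, parityFun, DirectSum.decompose_sub, DirectSum.sub_apply,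
    AddSubgroup.coe_sub, h0, h1, zero_sub]

theorem SMod.eq_zero_of_add_self (h2 : IsUnit (2 : R)) (M : SMod.{u, v} R 𝒜) {m : M.carrier}
    (h : m + m = 0) : m = 0 := by
  rw [← two_smul R m] at h
  exact h2.smul_eq_zero.mp h

/-- Even elements can be halved within `M₀`. It is not needed that `2⁻¹` is even in `R`: if
`2n = m` is even, comparing even components shows that the even component of `n` is a half. -/
theorem SMod.exists_half_even (h2 : IsUnit (2 : R)) (M : SMod.{u, v} R 𝒜) {m : M.carrier}
    (hm : m ∈ M.grading 0) : ∃ n ∈ M.grading 0, n + n = m := by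
  obtain ⟨c, hc⟩ := h2.exists_right_inv
  obtain ⟨n₀, hn₀, n₁, hn₁, hn⟩ := M.cover (c • m)
  have hsum : (n₀ + n₁) + (n₀ + n₁) = m := by
    rw [← hn, ← two_smul R (c • m), smul_smul, hc, one_smul]
  have hz := M.indep (n₀ + n₀ - m)
    (sub_mem (add_mem hn₀ hn₀) hm) (n₁ + n₁) (add_mem hn₁ hn₁) (by rw [← hsum]; abel)
  exact ⟨n₀, hn₀, sub_eq_zero.mp hz.1⟩

/-- **Statement 11.** Let `R` be a super ring in which `2` is invertible, and `(M, α)` a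
`C₂`-equivariant super `R`-module with respect to the degree-shift action: `α : M ≅ M(1̄)`
is an isomorphism of super modules (an `R`-linear bijection shifting the grading by `1̄`)
with `α(1̄) ∘ α = Id`.  Let `N = Φ(M, α)` be the even part `M₀` with the `R`-action `*`
(`a * x = a • x` for even `a`, `a * x = α (a • x)` for odd `a`).  Then the map
`φ : N ⊕ ^gN → M`, `φ(x) = x + α(x)`, `φ(^g y) = y - α(y)`, is an isomorphism of ordinary
`R`-modules, where `N ⊕ ^gN` carries the action `a • (x, y) = (a * x, g(a) * y)`. -/
theorem phiMap_isomorphism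
    (h2 : IsUnit (2 : R)) (M : SMod.{u, v} R 𝒜)
    (α : M.carrier →ₗ[R] M.carrier) (hbij : Function.Bijective α)
    (hα : ∀ (i : ZMod 2) (m : M.carrier), m ∈ M.grading i → α m ∈ M.grading (i + 1))
    (hinvol : ∀ m : M.carrier, α (α m) = m) :
    Function.Bijective (phiMap M α) ∧
    (∀ p q : ↥(M.grading 0) × ↥(M.grading 0),
        phiMap M α (p + q) = phiMap M α p + phiMap M α q) ∧
    (∀ (a : R) (p : ↥(M.grading 0) × ↥(M.grading 0)),
        phiMap M α (starSMul M α hα a p.1, starSMul M α hα (parityFun R 𝒜 a) p.2) =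
          a • phiMap M α p) := by
  have hodd : ∀ m ∈ M.grading 0, α m ∈ M.grading 1 := fun m hm => by
    simpa using hα 0 m hm
  have heven : ∀ m ∈ M.grading 1, α m ∈ M.grading 0 := fun m hm => hα 1 m hm
  have hadd : ∀ p q : ↥(M.grading 0) × ↥(M.grading 0),
      phiMap M α (p + q) = phiMap M α p + phiMap M α q := fun p q => by
    simp only [phiMap, Prod.fst_add, Prod.snd_add, AddSubgroup.coe_add, map_add]
    abel
  refine ⟨⟨?_, ?_⟩, hadd, ?_⟩
  · refine (injective_iff_map_eq_zero (AddMonoidHom.mk' (phiMap M α) hadd)).mpr ?_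
    rintro ⟨⟨x, hx⟩, ⟨y, hy⟩⟩ h
    replace h : x + α x + (y - α y) = 0 := h
    obtain ⟨hs, hd⟩ := M.indep (x + y) (add_mem hx hy) (α (x - y)) (hodd _ (sub_mem hx hy))
      (by rw [← h, map_sub]; abel)
    have hxy : x = y := sub_eq_zero.mp (by rw [← hinvol (x - y), hd, map_zero])
    subst hxy
    have hx0 := M.eq_zero_of_add_self h2 hs
    subst hx0
    rfl
  · intro m
    obtain ⟨m₀, hm₀, m₁, hm₁, rfl⟩ := M.cover m
    -- The preimage is `((m₀ + α m₁) / 2, (m₀ - α m₁) / 2)`, built from the halves `s`, `d`.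
    obtain ⟨s, hs, rfl⟩ := M.exists_half_even h2 hm₀
    obtain ⟨d, hd, hdm⟩ := M.exists_half_even h2 (heven _ hm₁)
    refine ⟨(⟨s + d, add_mem hs hd⟩, ⟨s - d, sub_mem hs hd⟩), ?_⟩
    rw [← hinvol m₁, ← hdm]
    simp only [phiMap, map_add, map_sub]
    abel
  · rintro a ⟨⟨x, hx⟩, ⟨y, hy⟩⟩
    conv_rhs => rw [← evenPart_add_oddPart (𝒜 := 𝒜) a]
    simp only [phiMap, starSMul, evenPart_parityFun, oddPart_parityFun, map_add, map_smul,
      hinvol, add_smul, neg_smul, map_neg, smul_add, smul_sub]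
    abel
end
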